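/- For every i ∈ ℕ, with ω_i = 2i + 3, one has ∫₀^{π/2} cos²(ω_i x)·tan²(x) dx = (π/2)·(ω_i − 1/2) and ∫₀^{π/2} sin²(ω_i x)·cos²(x)/sin²(x) dx = (π/2)·(ω_i − 1/2). -/

import Mathlib

open Real MeasureTheory

/-- The AdS linearized eigenvalue `ω_i = 2i + 3`. -/
noncomputable def ω (i : ℕ) : ℝ := 2 * i + 3

/-!
Write `Uₙ` for the Chebyshev polynomials of the second kind, so that
`sin (nx) = Uₙ₋₁(cos x) sin x`. The addition formula gives `Uₙ² - Uₙ₋₁² = U₂ₙ`, and every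
`U₂ₙ(cos x) = 1 + 2 ∑_{1 ≤ j ≤ n} cos (2jx)` has integral `π / 2` over `[0, π / 2]`. Telescoping,
the Fejér kernel `sin² (nx) / sin² x = Uₙ₋₁(cos x)²` has integral `n π / 2`. Since
`cos² x = 1 - sin² x`, subtracting `∫ sin² (nx) = π / 4` gives the second integral, and for odd `n`
the first is its image under `x ↦ π / 2 - x`.
-/

open Polynomial (eval_add eval_sub eval_mul eval_pow eval_ofNat)
open Polynomial.Chebyshev

theorem chebyshevU_add (R : Type*) [CommRing R] (m n : ℤ) :
    U R (m + n) = U R m * U R n - U R (m - 1) * U R (n - 1) := by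
  induction n using Polynomial.Chebyshev.induct with
  | zero => simp
  | one => simp only [U_add_one, U_one, sub_self, U_zero]; ring
  | add_two n ih₁ ih₀ =>
    rw [← add_assoc] at ih₁ ⊢
    rw [U_add_two R (m + n), ih₁, ih₀, U_add_two, add_sub_cancel_right,
      show (n + 2 - 1 : ℤ) = n + 1 by ring, U_sub_one R n]
    ring
  | neg_add_one n ih₀ ih₁ =>
    rw [← add_assoc] at ih₁
    rw [← add_sub_assoc, U_sub_one R (m + -n), ih₁, ih₀, add_sub_cancel_right, U_sub_one R (-n),
      U_sub_one R (-n - 1), sub_add_cancel, U_sub_one R (-n)]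
    ring

theorem chebyshevU_two_mul (R : Type*) [CommRing R] (n : ℤ) :
    U R (2 * n) = U R n ^ 2 - U R (n - 1) ^ 2 := by
  rw [two_mul, chebyshevU_add, sq, sq]

theorem sin_int_mul_sq_div_sin_sq (n : ℤ) {x : ℝ} (hx : sin x ≠ 0) :
    sin (n * x) ^ 2 / sin x ^ 2 = (U ℝ (n - 1)).eval (cos x) ^ 2 := by
  have hU : (U ℝ (n - 1)).eval (cos x) * sin x = sin (n * x) := by
    simpa only [Int.cast_sub, Int.cast_one, sub_add_cancel] using U_real_cos x (n - 1)
  rw [← hU, mul_pow, mul_div_cancel_right₀ _ (pow_ne_zero 2 hx)]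

theorem integral_cos_two_mul_int_mul {n : ℤ} (hn : n ≠ 0) :
    ∫ x in (0 : ℝ)..π / 2, cos (2 * n * x) = 0 := by
  have hn' : (2 * n : ℝ) ≠ 0 := by exact_mod_cast mul_ne_zero two_ne_zero hn
  have hend : 2 * n * (π / 2) = n * π := by ring
  rw [intervalIntegral.integral_comp_mul_left cos hn', integral_cos, hend, sin_int_mul_pi,
    mul_zero, sin_zero, sub_zero, smul_zero]

theorem integral_sin_int_mul_sq {n : ℤ} (hn : n ≠ 0) :
    ∫ x in (0 : ℝ)..π / 2, sin (n * x) ^ 2 = π / 4 := by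
  simp_rw [sin_sq_eq_half_sub, ← mul_assoc]
  rw [intervalIntegral.integral_sub intervalIntegrable_const
      (Continuous.intervalIntegrable (by fun_prop) _ _),
    intervalIntegral.integral_div _ fun x ↦ cos (2 * n * x), integral_cos_two_mul_int_mul hn,
    intervalIntegral.integral_const, smul_eq_mul]
  ring

theorem integral_eval_chebyshevU_two_mul_cos (n : ℕ) :
    ∫ x in (0 : ℝ)..π / 2, (U ℝ (2 * n)).eval (cos x) = π / 2 := by
  induction n with
  | zero => simp
  | succ n ih =>
    have hrec (x : ℝ) : (U ℝ (2 * (n + 1 : ℕ))).eval (cos x) =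
        2 * cos (2 * (n + 1 : ℤ) * x) + (U ℝ (2 * n)).eval (cos x) := by
      rw [Nat.cast_succ, mul_add_one, U_eq_two_mul_T_add_U, eval_add, eval_mul, eval_ofNat,
        T_real_cos, ← mul_add_one, Int.cast_mul, Int.cast_ofNat]
    simp_rw [hrec]
    rw [intervalIntegral.integral_add (Continuous.intervalIntegrable (by fun_prop) _ _)
        (Continuous.intervalIntegrable (by fun_prop) _ _),
      intervalIntegral.integral_const_mul, integral_cos_two_mul_int_mul (by omega), ih,
      mul_zero, zero_add]

theorem integral_eval_chebyshevU_sub_one_cos_sq (n : ℕ) :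
    ∫ x in (0 : ℝ)..π / 2, (U ℝ (n - 1)).eval (cos x) ^ 2 = n * (π / 2) := by
  induction n with
  | zero => simp
  | succ n ih =>
    have hrec (x : ℝ) : (U ℝ ((n + 1 : ℕ) - 1)).eval (cos x) ^ 2 =
        (U ℝ (2 * n)).eval (cos x) + (U ℝ (n - 1)).eval (cos x) ^ 2 := by
      rw [Nat.cast_succ, add_sub_cancel_right, chebyshevU_two_mul, eval_sub, eval_pow, eval_pow,
        sub_add_cancel]
    simp_rw [hrec]
    rw [intervalIntegral.integral_add (Continuous.intervalIntegrable (by fun_prop) _ _)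
        (Continuous.intervalIntegrable (by fun_prop) _ _),
      integral_eval_chebyshevU_two_mul_cos, ih, Nat.cast_succ]
    ring

theorem integral_sin_nat_mul_sq_mul_cos_sq_div_sin_sq {n : ℕ} (hn : n ≠ 0) :
    ∫ x in (0 : ℝ)..π / 2, sin (n * x) ^ 2 * cos x ^ 2 / sin x ^ 2 = π / 2 * (n - 1 / 2) := by
  have hkernel : ∀ x ∈ Set.Ioo 0 (π / 2), sin (n * x) ^ 2 * cos x ^ 2 / sin x ^ 2 =
      (U ℝ (n - 1)).eval (cos x) ^ 2 - sin ((n : ℤ) * x) ^ 2 := by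
    intro x hx
    have hsin : sin x ≠ 0 := (sin_pos_of_pos_of_lt_pi hx.1 (by linarith [hx.2, pi_pos])).ne'
    rw [← sin_int_mul_sq_div_sin_sq n hsin, cos_sq', Int.cast_natCast]
    field_simp
  rw [intervalIntegral.integral_congr_Ioo_of_le pi_div_two_pos.le hkernel,
    intervalIntegral.integral_sub (Continuous.intervalIntegrable (by fun_prop) _ _)
      (Continuous.intervalIntegrable (by fun_prop) _ _),
    integral_eval_chebyshevU_sub_one_cos_sq, integral_sin_int_mul_sq (mod_cast hn)]
  ring

theorem cos_nat_mul_pi_div_two_sub_sq {n : ℕ} (hn : Odd n) (x : ℝ) :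
    cos (n * (π / 2 - x)) ^ 2 = sin (n * x) ^ 2 := by
  obtain ⟨k, rfl⟩ := hn
  have hshift : ((2 * k + 1 : ℕ) : ℝ) * (π / 2 - x) =
      π / 2 - (2 * k + 1 : ℕ) * x + k * π := by
    push_cast
    ring
  rw [hshift, cos_add_nat_mul_pi, cos_pi_div_two_sub, mul_pow, ← pow_mul, mul_comm k, pow_mul,
    neg_one_sq, one_pow, one_mul]

theorem tan_pi_div_two_sub_sq (x : ℝ) : tan (π / 2 - x) ^ 2 = cos x ^ 2 / sin x ^ 2 := by
  rw [tan_pi_div_two_sub, tan_eq_sin_div_cos, inv_div, div_pow]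

theorem integral_cos_nat_mul_sq_mul_tan_sq {n : ℕ} (hn : Odd n) :
    ∫ x in (0 : ℝ)..π / 2, cos (n * x) ^ 2 * tan x ^ 2 = π / 2 * (n - 1 / 2) := by
  calc ∫ x in (0 : ℝ)..π / 2, cos (n * x) ^ 2 * tan x ^ 2
    _ = ∫ x in (0 : ℝ)..π / 2, cos (n * (π / 2 - x)) ^ 2 * tan (π / 2 - x) ^ 2 := by
      rw [intervalIntegral.integral_comp_sub_left (fun x ↦ cos (n * x) ^ 2 * tan x ^ 2) (π / 2),
        sub_self, sub_zero]
    _ = ∫ x in (0 : ℝ)..π / 2, sin (n * x) ^ 2 * cos x ^ 2 / sin x ^ 2 := by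
      simp_rw [cos_nat_mul_pi_div_two_sub_sq hn, tan_pi_div_two_sub_sq, mul_div_assoc]
    _ = π / 2 * (n - 1 / 2) := integral_sin_nat_mul_sq_mul_cos_sq_div_sin_sq hn.pos.ne'

theorem weighted_trig_square_integrals_general {n : ℕ} (hn : n ≠ 0) :
    (Odd n → ∫ x in Set.Ioo (0 : ℝ) (π / 2), cos (n * x) ^ 2 * tan x ^ 2 =
      π / 2 * (n - 1 / 2)) ∧
    ∫ x in Set.Ioo (0 : ℝ) (π / 2), sin (n * x) ^ 2 * cos x ^ 2 / sin x ^ 2 =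
      π / 2 * (n - 1 / 2) := by
  simp_rw [← integral_Ioc_eq_integral_Ioo,
    ← intervalIntegral.integral_of_le pi_div_two_pos.le]
  exact ⟨integral_cos_nat_mul_sq_mul_tan_sq, integral_sin_nat_mul_sq_mul_cos_sq_div_sin_sq hn⟩

theorem ω_eq_natCast (i : ℕ) : ω i = (2 * i + 3 : ℕ) := by
  simp only [ω, Nat.cast_add, Nat.cast_mul, Nat.cast_ofNat]

/-- For every `i ∈ ℕ`, `∫₀^{π/2} cos²(ω_i x)·tan²(x) dx = (π/2)·(ω_i − 1/2)` and
`∫₀^{π/2} sin²(ω_i x)·cos²(x)/sin²(x) dx = (π/2)·(ω_i − 1/2)`. -/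
theorem weighted_trig_square_integrals (i : ℕ) :
    (∫ x in Set.Ioo (0 : ℝ) (Real.pi / 2),
        Real.cos (ω i * x) ^ 2 * Real.tan x ^ 2) =
      Real.pi / 2 * (ω i - 1 / 2) ∧
    (∫ x in Set.Ioo (0 : ℝ) (Real.pi / 2),
        Real.sin (ω i * x) ^ 2 * Real.cos x ^ 2 / Real.sin x ^ 2) =
      Real.pi / 2 * (ω i - 1 / 2) := by
  rw [ω_eq_natCast]
  exact (weighted_trig_square_integrals_general (by omega)).imp_left (· ⟨i + 1, by ring⟩)
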